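/- arXiv:1001.0253 — 4 statements merged into one kernel-verified Lean document; each statement's English description precedes it below -/
import Mathlib

section
/- There exist a finite alphabet B, a cellular automaton S on B, and states κ, γ ∈ B with κ spreading for S, such that: (1) for every J ∈ ℕ there is a configuration z ∈ B^ℤ with S^J(z) equal to the uniform configuration of γ's and with S^j(z)_i ≠ γ for all i ∈ ℤ and all j < J; and (2) every configuration x in the limit set Ω_S with x₀ = γ satisfies x_i ∈ {κ, γ} for all i ∈ ℤ. -/
/-- The configuration space of a one-dimensional cellular automaton over alphabet `B`. -/
abbrev Config (B : Type*) := ℤ → B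

/-- The global map induced by the local rule `f` of radius `r`. -/
def caMap {B : Type*} (r : ℕ) (f : (Fin (2 * r + 1) → B) → B) : Config B → Config B :=
  fun x i => f fun j => x (i - (r : ℤ) + ((j : ℕ) : ℤ))

/-- The limit set `Ω_F = ⋂_{j ∈ ℕ} F^j(B^ℤ)`. -/
def limitSet {B : Type*} (F : Config B → Config B) : Set (Config B) :=
  ⋂ j : ℕ, Set.range F^[j]

/-- A state `θ` is spreading for the local rule `f` if `f(u) = θ` whenever the
letter `θ` occurs in `u`. -/
def SpreadingRule {B : Type*} {n : ℕ} (f : (Fin n → B) → B) (θ : B) : Prop :=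
  ∀ u : Fin n → B, (∃ j, u j = θ) → f u = θ

/-! ## Abstract space-time histories of signals -/

/-- An abstract space-time history of signals with speeds `-2..2`. `D p t`: the cell `p` at time `t`
is a normal cell; `Ln v p t`: a signal of speed `v` is present at cell `p` at time `t`. -/
structure Hist where
  D : ℤ → ℤ → Prop
  Ln : ℤ → ℤ → ℤ → Prop
  cone : ∀ p q t, D p t → -100 ≤ q - p → q - p ≤ 100 → D q (t - 1)
  pers : ∀ v p t, D p t → -2 ≤ v → v ≤ 2 → Ln v (p - v) (t - 1) → Ln v p t
  trace : ∀ v p t, D p t → Ln v p t →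
    (∀ u, -2 ≤ u → u ≤ 2 → Ln u p t) ∨ Ln v (p - v) (t - 1)
  etyp : ∀ p t, D p t → (∀ u, -2 ≤ u → u ≤ 2 → Ln u p t) →
    (∀ u, -2 ≤ u → u ≤ 2 → (Ln u (p - u) (t - 1) ↔ u % 2 = 0)) ∨
    (∀ u, -2 ≤ u → u ≤ 2 → (Ln u (p - u) (t - 1) ↔ u % 2 = 1))
  conf : ∀ v v' p t, D p t → Ln v (p - v) (t - 1) → Ln v' (p - v') (t - 1) → (v - v') % 2 = 0
  birth : ∀ v v' p t, D p t → Ln v (p - v) (t - 1) → Ln v' (p - v') (t - 1) → (v - v') % 4 ≠ 0 →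
    (∀ u, -2 ≤ u → u ≤ 2 → Ln u p t)
  two : ∀ v v' p t, D p t → Ln v p t → Ln v' p t → (v - v') % 4 ≠ 0 →
    (∀ u, -2 ≤ u → u ≤ 2 → Ln u p t)
  jump : ∀ v p q t, D p t → Ln v q (t - 1) → Ln (v - 2) (q + 1) (t - 1) →
    -5 ≤ q - p → q - p ≤ 5 → -5 ≤ q + 1 - p → q + 1 - p ≤ 5 → False

namespace Hist

/-- An emission point: all signals are present. -/
def E (H : Hist) (p t : ℤ) : Prop := ∀ u, -2 ≤ u → u ≤ 2 → H.Ln u p t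

/-- The mirror image of a history. -/
def mir (H : Hist) : Hist where
  D p t := H.D (-p) t
  Ln v p t := H.Ln (-v) (-p) t
  cone p q t h h1 h2 := H.cone _ _ _ h (by omega) (by omega)
  pers v p t h h1 h2 h3 := by
    refine H.pers _ _ _ h (by omega) (by omega) ?_
    rwa [show -p - -v = -(p - v) by ring]
  trace v p t h h1 := by
    rcases H.trace _ _ _ h h1 with h2 | h2
    · exact Or.inl fun u hu hu' => h2 _ (by omega) (by omega)
    · right
      rwa [show -(p - v) = -p - -v by ring]
  etyp p t h h1 := by
    have hE : ∀ u, -2 ≤ u → u ≤ 2 → H.Ln u (-p) t := fun u hu hu' => by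
      have := h1 (-u) (by omega) (by omega)
      rwa [neg_neg] at this
    rcases H.etyp _ _ h hE with h2 | h2
    · left
      intro u hu hu'
      have := h2 (-u) (by omega) (by omega)
      rw [show -(p - u) = -p - -u by ring, this]
      omega
    · right
      intro u hu hu'
      have := h2 (-u) (by omega) (by omega)
      rw [show -(p - u) = -p - -u by ring, this]
      omega
  conf v v' p t h h1 h2 := by
    have := H.conf (-v) (-v') (-p) t h (by rwa [show -p - -v = -(p - v) by ring])
      (by rwa [show -p - -v' = -(p - v') by ring])
    omega
  birth v v' p t h h1 h2 h3 := by
    have := H.birth (-v) (-v') (-p) t h (by rwa [show -p - -v = -(p - v) by ring])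
      (by rwa [show -p - -v' = -(p - v') by ring]) (by omega)
    exact fun u hu hu' => this _ (by omega) (by omega)
  two v v' p t h h1 h2 h3 := by
    have := H.two (-v) (-v') (-p) t h h1 h2 (by omega)
    exact fun u hu hu' => this _ (by omega) (by omega)
  jump v p q t h h1 h2 h3 h4 h5 h6 := by
    refine H.jump (2 - v) (-p) (-(q + 1)) t h ?_ ?_ (by omega) (by omega) (by omega) (by omega)
    · rwa [show 2 - v = -(v - 2) by ring]
    · rwa [show 2 - v - 2 = -v by ring, show -(q + 1) + 1 = -q by ring]

theorem mir_E (H : Hist) (p t : ℤ) : H.mir.E p t ↔ H.E (-p) t := by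
  constructor
  · intro h u hu hu'
    have := h (-u) (by omega) (by omega)
    change H.Ln (- -u) _ _ at this
    rwa [neg_neg] at this
  · intro h u hu hu'
    exact h (-u) (by omega) (by omega)

variable (H : Hist)

theorem fwd (v : ℤ) (h1 : -2 ≤ v) (h2 : v ≤ 2) (n : ℕ) : ∀ (p t q t' : ℤ), H.Ln v p t →
    q = p + v * n → t' = t + n → H.D q t' → H.Ln v q t' := by
  induction n with
  | zero => 
    intro p t q t' h hq ht hD
    have : q = p := by simpa using hq
    have : t' = t := by simpa using ht
    subst_vars
    assumption
  | succ n ih =>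
    intro p t q t' h hq ht hD
    refine H.pers _ _ _ hD h1 h2 ?_
    refine ih p t _ _ h ?_ ?_ (H.cone _ _ _ hD (by omega) (by omega))
    · rw [hq]; push_cast; ring
    · rw [ht]; push_cast; ring

theorem back (v : ℤ) (h1 : -2 ≤ v) (h2 : v ≤ 2) (n : ℕ) : ∀ (p t q t' : ℤ), H.Ln v p t → H.D p t →
    q = p - v * n → t' = t - n →
    (∀ m : ℕ, m < n → ¬ H.E (p - v * m) (t - m)) → H.Ln v q t' := by
  induction n with
  | zero =>
    intro p t q t' h hD hq ht _
    have : q = p := by simpa using hq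
    have : t' = t := by simpa using ht
    subst_vars
    assumption
  | succ n ih =>
    intro p t q t' h hD hq ht hE
    rcases H.trace _ _ _ hD h with h3 | h3
    · exact absurd h3 (by simpa [E] using hE 0 (by omega))
    · refine ih (p - v) (t - 1) q t' h3 (H.cone _ _ _ hD (by omega) (by omega)) ?_ ?_ ?_
      · rw [hq]; push_cast; ring
      · rw [ht]; push_cast; ring
      · intro m hm hc
        apply hE (m + 1) (by omega)
        convert hc using 1
        · push_cast; ring
        · push_cast; ring

/-- Signals of consecutive speeds never meet. -/
theorem hit (v p t p' q t' d : ℤ) (h1 : -1 ≤ v) (h2 : v ≤ 2) (a : H.Ln v p t)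
    (b : H.Ln (v - 1) p' t) (hd : 0 < d) (hp : p' = p + d) (hq : q = p + v * d) (ht : t' = t + d)
    (hD : H.D q t') : False := by
  obtain ⟨n, rfl⟩ : ∃ n : ℕ, d = n + 1 := ⟨(d - 1).toNat, by omega⟩
  have A := H.fwd v (by omega) h2 n p t (q - v) (t' - 1) a (by rw [hq]; ring) (by omega)
    (H.cone _ _ _ hD (by omega) (by omega))
  have B := H.fwd (v - 1) (by omega) (by omega) n p' t (q - (v - 1)) (t' - 1) b
    (by rw [hq, hp]; ring) (by omega)
    (H.cone _ _ _ hD (by omega) (by omega))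
  have := H.conf _ _ _ _ hD A B
  omega

/-- Signals of speeds `v` and `v - 2` meet exactly and create an emission point. -/
theorem meet (v p t p' d : ℤ) (h1 : 0 ≤ v) (h2 : v ≤ 2) (a : H.Ln v p t)
    (b : H.Ln (v - 2) p' t) (hd : 0 < d) (hp : p' = p + d)
    (hD : ∀ m : ℤ, (d = 2 * m ∨ d + 1 = 2 * m) → H.D (p + v * m) (t + m)) :
    ∃ m : ℤ, d = 2 * m ∧ H.E (p + v * m) (t + m) := by
  obtain ⟨n, hn⟩ : ∃ n : ℕ, d = 2 * (n + 1) ∨ d + 1 = 2 * (n + 1) :=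
    ⟨((d - 1) / 2).toNat, by omega⟩
  have hD' := hD (n + 1) hn
  have A := H.fwd v (by omega) h2 n p t (p + v * (n + 1) - v) (t + (n + 1) - 1) a (by ring)
    (by omega) (H.cone _ _ _ hD' (by omega) (by omega))
  rcases hn with hn | hn
  · refine ⟨n + 1, hn, ?_⟩
    have B := H.fwd (v - 2) (by omega) (by omega) n p' t (p + v * (n + 1) - (v - 2))
      (t + (n + 1) - 1) b (by rw [hp, hn]; ring)
      (by omega) (H.cone _ _ _ hD' (by omega) (by omega))
    exact H.birth _ _ _ _ hD' A B (by omega)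
  · exfalso
    have B := H.fwd (v - 2) (by omega) (by omega) n p' t (p + v * (n + 1) - v + 1)
      (t + (n + 1) - 1) b (by rw [hp, show d = 2 * (n + 1) - 1 by omega]; ring)
      (by omega) (H.cone _ _ _ hD' (by omega) (by omega))
    exact H.jump _ _ _ _ hD' A B (by omega) (by omega) (by omega) (by omega)

theorem E.ln {H : Hist} {p t : ℤ} (h : H.E p t) (u : ℤ) (h1 : -2 ≤ u := by norm_num)
    (h2 : u ≤ 2 := by norm_num) : H.Ln u p t := h u h1 h2

/-- The light cone hypothesis. -/
def Good (H : Hist) : Prop := ∀ q t, t ≤ -1 → q ≤ 100 * (-t) → -q ≤ 100 * (-t) → H.D q t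

theorem Good.mir {H : Hist} (h : H.Good) : H.mir.Good := fun q t h1 h2 h3 =>
  h (-q) t h1 (by omega) (by omega)

/-- Two neighbouring emission points at level `L`. -/
def P (H : Hist) (L a : ℤ) : Prop := 0 < L ∧ -L ≤ a ∧ a ≤ 0 ∧ (L = 1 ∨ ∃ h, L = 2 * h) ∧
  H.E a (-L) ∧ H.E (a + L) (-L)

theorem P.mir {H : Hist} {L a : ℤ} (h : H.P L a) : H.mir.P L (-a - L) := by
  obtain ⟨h1, h2, h3, h4, h5, h6⟩ := h
  refine ⟨h1, by omega, by omega, h4, ?_, ?_⟩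
  · rw [mir_E, show -(-a - L) = a + L by ring]; exact h6
  · rw [mir_E, show -(-a - L + L) = a by ring]; exact h5

variable {H}

theorem noW (hG : H.Good) {L a q : ℤ} (hP : H.P L a) (h1 : a < q) (h2 : q < a + L)
    (h : H.Ln 0 q (-L)) : False := by
  obtain ⟨hL, ha, ha', -, e1, e2⟩ := hP
  by_cases hc : q - a ≤ a + L - q
  · exact H.hit 1 a (-L) q q (-L + (q - a)) (q - a) (by omega) (by omega) (e1.ln 1) h (by omega)
      (by omega) (by omega) (by omega) (hG _ _ (by omega) (by omega) (by omega))
  · exact H.hit 0 q (-L) (a + L) q (-L + (a + L - q)) (a + L - q) (by omega) (by omega) h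
      (e2.ln (0 - 1)) (by omega)
      (by omega) (by omega) (by omega) (hG _ _ (by omega) (by omega) (by omega))

theorem noE (hG : H.Good) {L a q t : ℤ} (hP : H.P L a) (h1 : a < q) (h2 : q < a + L) (ht : t ≤ -L)
    (h : H.E q t) : False := by
  have hP' := hP
  obtain ⟨hL, ha, ha', -, e1, e2⟩ := hP'
  exact noW hG hP h1 h2 (H.fwd 0 (by omega) (by omega) (-L - t).toNat q t _ _ (h.ln 0) (by omega)
    (by omega) (hG _ _ (by omega) (by omega) (by omega)))

/-- Tracing back the left signal arriving at the left end of a pair. -/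
theorem traceL (hG : H.Good) {L a y : ℤ} (hP : H.P L a) (h : H.Ln (-1) (a + 1) (-L - 1))
    (hy : 1 ≤ y) (hy' : y ≤ L) : H.Ln (-1) (a + y) (-L - y) := by
  have hP' := hP
  obtain ⟨hL, ha, ha', -, e1, e2⟩ := hP'
  refine H.back (-1) (by omega) (by omega) (y - 1).toNat _ _ _ _ h
    (hG _ _ (by omega) (by omega) (by omega)) (by omega) (by omega) ?_
  intro m hm hE
  exact noE hG hP (by omega) (by omega) (by omega) hE

theorem oddodd (hG : H.Good) {L a s : ℤ} (hP : H.P L a) (hs : 0 ≤ s) (hs' : s < L)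
    (h : H.Ln (-1) (a + 1) (-L - 1)) (h' : H.Ln 1 (a + L - 1) (-L - s - 1)) : False := by
  have hP' := hP
  obtain ⟨hL, ha, ha', -, e1, e2⟩ := hP'
  have key : ∀ x : ℤ, 1 ≤ x → x ≤ L → H.Ln 1 (a + L - x) (-L - s - x) := by
    intro x hx hx'
    refine H.back 1 (by omega) (by omega) (x - 1).toNat _ _ _ _ h'
      (hG _ _ (by omega) (by omega) (by omega)) (by omega) (by omega) ?_
    intro m hm hE
    exact noE hG hP (by omega) (by omega) (by omega) hE
  obtain ⟨x, hx | hx⟩ : ∃ x, L - s = 2 * x ∨ L - s + 1 = 2 * x := ⟨(L - s + 1) / 2, by omega⟩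
  · have A := key x (by omega) (by omega)
    have B := traceL hG hP h (y := s + x) (by omega) (by omega)
    rw [show a + (s + x) = a + L - x by omega, show -L - (s + x) = -L - s - x by omega] at B
    exact noE hG hP (by omega) (by omega) (by omega)
      (H.two _ _ _ _ (hG _ _ (by omega) (by omega) (by omega)) A B (by omega))
  · have A := key x (by omega) (by omega)
    have B := traceL hG hP h (y := s + x) (by omega) (by omega)
    rw [show a + (s + x) = a + L - x + 1 by omega, show -L - (s + x) = -L - s - x by omega] at B
    exact H.jump 1 (a + L - x) (a + L - x) (-L - s - x + 1)
      (hG _ _ (by omega) (by omega) (by omega))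
      (by rwa [add_sub_cancel_right]) (by rw [add_sub_cancel_right]; exact B)
      (by omega) (by omega) (by omega) (by omega)

/-- Two emissions at the same column, too close in time. -/
theorem dbl {a t s d : ℤ} (hs : 0 < s) (hd : s < d) (h1 : H.Ln 1 a (t - s)) (h2 : H.Ln 1 a t)
    (h3 : H.Ln (-1) (a + d) t)
    (hD : ∀ q t', t ≤ t' → 2 * (t' - t) ≤ d + s → a ≤ q → q ≤ a + d → H.D q t') : False := by
  have A := H.fwd 1 (by omega) (by omega) s.toNat _ _ (a + s) t h1 (by omega) (by omega)
    (hD _ _ (by omega) (by omega) (by omega) (by omega))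
  obtain ⟨m, hm, hE⟩ := H.meet 1 (a + s) t (a + d) (d - s) (by omega) (by omega) A h3 (by omega)
    (by omega) (fun m hm => hD _ _ (by omega) (by omega) (by omega) (by omega))
  have B := H.fwd 1 (by omega) (by omega) m.toNat _ _ (a + m) (t + m) h2 (by omega) (by omega)
    (hD _ _ (by omega) (by omega) (by omega) (by omega))
  exact H.hit 1 (a + m) (t + m) (a + s + 1 * m) (a + s + m) (t + m + s) s (by omega) (by omega) B
    (hE.ln 0) hs (by omega) (by omega) (by omega) (hD _ _ (by omega) (by omega) (by omega) (by omega))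

theorem eveneven (hG : H.Good) {L a : ℤ} (hP : H.P L a)
    (h : H.Ln 0 a (-L - 1)) (h' : H.Ln 2 (a + L - 2) (-L - 1)) : False := by
  have hP' := hP
  obtain ⟨hL, ha, ha', hpar, e1, e2⟩ := hP'
  rcases hpar with rfl | ⟨k, rfl⟩
  · refine H.jump 2 a (a - 1) (-1) (hG _ _ (by omega) (by omega) (by omega)) ?_ ?_
      (by omega) (by omega) (by omega) (by omega)
    · convert h' using 1 <;> omega
    · convert h using 1 <;> omega
  · have F : H.Ln 2 a (-(2 * k) - k) := by
      refine H.back 2 (by omega) (by omega) (k - 1).toNat _ _ _ _ h'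
        (hG _ _ (by omega) (by omega) (by omega)) (by omega) (by omega) ?_
      intro m hm hE
      exact noE hG hP (by omega) (by omega) (by omega) hE
    have : ∃ s, 0 < s ∧ s ≤ k ∧ H.E a (-(2 * k) - s) := by
      by_contra hcon
      push Not at hcon
      have W : H.Ln 0 a (-(2 * k) - k) := by
        refine H.back 0 (by omega) (by omega) (k - 1).toNat _ _ _ _ h
          (hG _ _ (by omega) (by omega) (by omega)) (by omega) (by omega) ?_
        intro m hm hE
        refine hcon (m + 1) (by omega) (by omega) ?_
        convert hE using 1 <;> omega
      exact hcon k (by omega) (by omega)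
        (H.two _ _ _ _ (hG _ _ (by omega) (by omega) (by omega)) F W (by omega))
    obtain ⟨s, hs, hs', hE⟩ := this
    exact dbl (a := a) (t := -(2 * k)) (s := s) (d := 2 * k) hs (by omega) (hE.ln 1) (e1.ln 1)
      (e2.ln (-1)) (fun q t' _ _ _ _ => hG _ _ (by omega) (by omega) (by omega))

theorem down {p t L : ℤ} (hL : 0 < L) (v : ℤ) (h1 : 0 ≤ v) (h2 : v ≤ 2) {q t' : ℤ}
    (e1 : H.E p t) (e2 : H.E (p + 2 * L) t) (hq : q = p + v * L) (ht : t' = t + L)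
    (hD : H.D q t') : H.E q t' := by
  subst hq ht
  obtain ⟨m, hm, hE⟩ := H.meet v p t (p + 2 * L) (2 * L) h1 h2 (e1.ln v (by omega) h2)
    (e2.ln (v - 2) (by omega) (by omega)) (by omega) rfl (fun m hm => by
      obtain rfl : m = L := by omega
      exact hD)
  obtain rfl : m = L := by omega
  exact hE

/-- The case odd-even of the step to the next level. -/
theorem upA (hG : H.Good) {L e : ℤ} (hP : H.P L e)
    (hodd : ∀ u, -2 ≤ u → u ≤ 2 → (H.Ln u (e - u) (-L - 1) ↔ u % 2 = 1))
    (heven : ∀ u, -2 ≤ u → u ≤ 2 → (H.Ln u (e + L - u) (-L - 1) ↔ u % 2 = 0)) :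
    H.P (2 * L) (e - L) := by
  have hP' := hP
  obtain ⟨hL, ha, ha', hpar, e1, e2⟩ := hP'
  have hLm : H.Ln (-1) (e + 1) (-L - 1) := by
    have := (hodd (-1) (by omega) (by omega)).2 (by omega)
    rwa [sub_neg_eq_add] at this
  have hRm : H.Ln 1 (e - 1) (-L - 1) := (hodd 1 (by omega) (by omega)).2 (by omega)
  have hFm : H.Ln 2 (e + L - 2) (-L - 1) := (heven 2 (by omega) (by omega)).2 (by omega)
  have hWm : H.Ln 0 (e + L) (-L - 1) := by
    have := (heven 0 (by omega) (by omega)).2 (by omega)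
    rwa [sub_zero] at this
  -- the wall at `e + L` persists back to `-2L`
  have hW : ∀ n : ℕ, (n : ℤ) + 1 ≤ L → H.Ln 0 (e + L) (-L - (n + 1)) := by
    intro n
    induction n with
    | zero => intro _; simpa using hWm
    | succ n ih =>
      intro hn
      push_cast at hn ⊢
      have h0 := ih (by omega)
      have hD0 : H.D (e + L) (-L - (n + 1)) := hG _ _ (by omega) (by omega) (by omega)
      have key : H.Ln 0 (e + L - 0) (-L - (n + 1) - 1) := by
        rcases H.trace _ _ _ hD0 h0 with h3 | h3
        · rcases H.etyp _ _ hD0 h3 with h4 | h4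
          · exact (h4 0 (by omega) (by omega)).2 (by omega)
          · exact (oddodd hG hP (s := n + 1) (by omega) (by omega) hLm
              ((h4 1 (by omega) (by omega)).2 (by omega))).elim
        · exact h3
      convert key using 1 <;> omega
  have hW' : ∀ s : ℤ, 1 ≤ s → s ≤ L → H.Ln 0 (e + L) (-L - s) := by
    intro s hs hs'
    have := hW (s - 1).toNat (by omega)
    convert this using 1
    omega
  have E2 : H.E (e + L) (-(2 * L)) := by
    have A := hW' L (by omega) (by omega)
    have B := traceL hG hP hLm (y := L) (by omega) (by omega)
    rw [show -(2 * L) = -L - L by omega]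
    exact H.two _ _ _ _ (hG _ _ (by omega) (by omega) (by omega)) A B (by omega)
  have R : H.Ln 1 (e - L) (-(2 * L)) := by
    refine H.back 1 (by omega) (by omega) (L - 1).toNat _ _ _ _ hRm
      (hG _ _ (by omega) (by omega) (by omega)) (by omega) (by omega) ?_
    intro m hm hE
    obtain ⟨d, hd⟩ : ∃ d : ℤ, d = m + 1 := ⟨_, rfl⟩
    rw [show e - 1 - 1 * (m : ℤ) = e - d by omega, show -L - 1 - (m : ℤ) = -L - d by omega] at hE
    by_cases hc : 2 * d ≤ L
    · have Wd : H.Ln 0 (e - d) (-L) := H.fwd 0 (by omega) (by omega) d.toNat _ _ _ _ (hE.ln 0)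
        (by omega) (by omega) (hG _ _ (by omega) (by omega) (by omega))
      exact H.hit 0 (e - d) (-L) e (e - d) (-L + d) d (by omega) (by omega) Wd (e1.ln (0 - 1))
        (by omega) (by omega) (by omega) (by omega) (hG _ _ (by omega) (by omega) (by omega))
    · obtain ⟨k, rfl⟩ : ∃ k, L = 2 * k := by
        rcases hpar with h | h
        · omega
        · exact h
      obtain ⟨x, hx, hE2⟩ := H.meet 2 (e - d) (-(2 * k) - d) (e + 2 * k) (2 * k + d) (by omega)
        (by omega) (hE.ln 2) (hW' d (by omega) (by omega)) (by omega) (by omega)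
        (fun m hm => hG _ _ (by omega) (by omega) (by omega))
      obtain ⟨x', hx', hE3⟩ := H.meet 1 e (-(2 * k)) (e + 2 * k) (2 * k) (by omega)
        (by omega) (e1.ln 1) (e2.ln (1 - 2)) (by omega) (by omega)
        (fun m hm => hG _ _ (by omega) (by omega) (by omega))
      obtain rfl : k = x' := by omega
      obtain ⟨δ, hδ⟩ : ∃ δ : ℤ, δ = x - d := ⟨_, rfl⟩
      have A := H.fwd (-1) (by omega) (by omega) (k - δ).toNat _ _ (e + k + δ) (-k) (hE2.ln (-1))
        (by omega) (by omega) (hG _ _ (by omega) (by omega) (by omega))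
      have B := hE3.ln 0
      rw [show e + 1 * k = e + k by omega, show -(2 * k) + k = -k by omega] at B
      exact H.hit 0 (e + k) (-k) (e + k + δ) (e + k) (-k + δ) δ (by omega) (by omega) B A
        (by omega) (by omega) (by omega) (by omega) (hG _ _ (by omega) (by omega) (by omega))
  have F : H.Ln 2 (e - L) (-(2 * L)) := by
    refine H.back 2 (by omega) (by omega) (L - 1).toNat _ _ _ _ hFm
      (hG _ _ (by omega) (by omega) (by omega)) (by omega) (by omega) ?_
    intro m hm hE
    obtain ⟨x, hx⟩ : ∃ x : ℤ, x = m + 1 := ⟨_, rfl⟩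
    rw [show e + L - 2 - 2 * (m : ℤ) = e + L - 2 * x by omega,
      show -L - 1 - (m : ℤ) = -L - x by omega] at hE
    rcases lt_trichotomy (L - 2 * x) 0 with hc | hc | hc
    · have A := traceL hG hP hLm (y := x) (by omega) (by omega)
      obtain ⟨m, hm, hE2⟩ := H.meet 1 (e + L - 2 * x) (-L - x) (e + x) (3 * x - L) (by omega)
        (by omega) (hE.ln 1) A (by omega) (by omega)
        (fun m hm => hG _ _ (by omega) (by omega) (by omega))
      exact noE hG hP (by omega) (by omega) (by omega) hE2
    · have A := H.fwd 0 (by omega) (by omega) (x - 1).toNat _ _ (e - 0) (-L - 1) (hE.ln 0)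
        (by omega) (by omega) (hG _ _ (by omega) (by omega) (by omega))
      have := (hodd 0 (by omega) (by omega)).1 A
      omega
    · exact noE hG hP (by omega) (by omega) (by omega) hE
  refine ⟨by omega, by omega, by omega, Or.inr ⟨L, rfl⟩, ?_, ?_⟩
  · exact H.two _ _ _ _ (hG _ _ (by omega) (by omega) (by omega)) R F (by omega)
  · rwa [show e - L + 2 * L = e + L by ring]

theorem up (hG : H.Good) {L a : ℤ} (hP : H.P L a) : H.P (2 * L) (a - L) ∨ H.P (2 * L) a := by
  have hP' := hP
  obtain ⟨hL, ha, ha', hpar, e1, e2⟩ := hP'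
  have D1 : H.D a (-L) := hG _ _ (by omega) (by omega) (by omega)
  have D2 : H.D (a + L) (-L) := hG _ _ (by omega) (by omega) (by omega)
  rcases H.etyp _ _ D1 e1 with h1 | h1 <;> rcases H.etyp _ _ D2 e2 with h2 | h2
  · refine (eveneven hG hP ?_ ((h2 2 (by omega) (by omega)).2 (by omega))).elim
    have := (h1 0 (by omega) (by omega)).2 (by omega)
    rwa [sub_zero] at this
  · right
    have := upA hG.mir hP.mir (fun u hu hu' => by
        have := h2 (-u) (by omega) (by omega)
        change H.Ln (-u) (-(-a - L - u)) _ ↔ _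
        rw [show -(-a - L - u) = a + L - -u by ring, this]
        omega) (fun u hu hu' => by
        have := h1 (-u) (by omega) (by omega)
        change H.Ln (-u) (-(-a - L + L - u)) _ ↔ _
        rw [show -(-a - L + L - u) = a - -u by ring, this]
        omega)
    obtain ⟨q1, q2, q3, q4, q5, q6⟩ := this
    rw [mir_E] at q5 q6
    refine ⟨q1, by omega, by omega, q4, ?_, ?_⟩
    · convert q6 using 1; omega
    · convert q5 using 1; omega
  · left
    exact upA hG hP h1 h2
  · refine (oddodd hG hP (s := 0) le_rfl hL ?_ ?_).elim
    · have := (h1 (-1) (by omega) (by omega)).2 (by omega)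
      rwa [sub_neg_eq_add] at this
    · have := (h2 1 (by omega) (by omega)).2 (by omega)
      convert this using 1
      omega

/-- A wall that is the left end of three consecutive levels. -/
theorem wallB (hG : H.Good) {M b : ℤ} (hP : H.P M b) (E2 : H.E b (-(2 * M)))
    (E4 : H.E b (-(4 * M))) : H.E (b - 2 * M) (-(2 * M)) := by
  have hP' := hP
  obtain ⟨hM, ha, ha', hpar, e1, e2⟩ := hP'
  have hW : ∀ t, -(2 * M) ≤ t → t ≤ -1 → b ≤ 100 * (-t) → -b ≤ 100 * (-t) → H.Ln 0 b t := by
    intro t h1 h2 h3 h4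
    exact H.fwd 0 (by omega) (by omega) (t + 2 * M).toNat _ _ _ _ (E2.ln 0) (by omega) (by omega)
      (hG _ _ h2 h3 h4)
  have hFm : H.Ln 2 (b - 2) (-M - 1) := by
    have D1 : H.D b (-M) := hG _ _ (by omega) (by omega) (by omega)
    rcases H.etyp _ _ D1 e1 with h1 | h1
    · exact (h1 2 (by omega) (by omega)).2 (by omega)
    · have := (h1 0 (by omega) (by omega)).1
        (by rw [sub_zero]; exact hW _ (by omega) (by omega) (by omega) (by omega))
      omega
  have F : H.Ln 2 (b - 2 * M) (-(2 * M)) := by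
    refine H.back 2 (by omega) (by omega) (M - 1).toNat _ _ _ _ hFm
      (hG _ _ (by omega) (by omega) (by omega)) (by omega) (by omega) ?_
    intro m hm hE
    obtain ⟨u, hu⟩ : ∃ u : ℤ, u = m + 1 := ⟨_, rfl⟩
    rw [show b - 2 - 2 * (m : ℤ) = b - 2 * u by omega, show -M - 1 - (m : ℤ) = -M - u by omega] at hE
    by_cases hc : 2 * u ≤ M
    · exact H.hit 1 (b - 2 * u) (-M - u) b b (-M + u) (2 * u) (by omega) (by omega) (hE.ln 1)
        (hW _ (by omega) (by omega) (by omega) (by omega)) (by omega) (by omega) (by omega)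
        (by omega) (hG _ _ (by omega) (by omega) (by omega))
    · obtain ⟨k, rfl⟩ : ∃ k, M = 2 * k := by
        rcases hpar with h | h
        · omega
        · exact h
      obtain ⟨δ, hδ⟩ : ∃ δ : ℤ, δ = 2 * k - u := ⟨_, rfl⟩
      have Lb := H.fwd (-1) (by omega) (by omega) δ.toNat _ _ (b - δ) (-(2 * k) - u) (E2.ln (-1))
        (by omega) (by omega) (hG _ _ (by omega) (by omega) (by omega))
      obtain ⟨x, hx, hE2⟩ := H.meet 1 (b - 2 * u) (-(2 * k) - u) (b - δ) (2 * u - δ) (by omega)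
        (by omega) (hE.ln 1) Lb (by omega) (by omega)
        (fun m hm => hG _ _ (by omega) (by omega) (by omega))
      obtain ⟨y, hy, hE3⟩ := H.meet 2 _ _ b (2 * u - x) (by omega)
        (by omega) (hE2.ln 2) (hW _ (by omega) (by omega) (by omega) (by omega)) (by omega)
        (by omega) (fun m hm => hG _ _ (by omega) (by omega) (by omega))
      have E1 : H.E b (-k) := down (L := k) (by omega) 0 (by omega) (by omega) e1 e2
        (by omega) (by omega) (hG _ _ (by omega) (by omega) (by omega))
      have Lk := H.fwd (-1) (by omega) (by omega) k.toNat _ _ (b + k) (-k) (e2.ln (-1))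
        (by omega) (by omega) (hG _ _ (by omega) (by omega) (by omega))
      have R1 := hE3.ln 1
      obtain ⟨s, hs⟩ : ∃ s : ℤ, s = -k - (-(2 * k) - u + x + y) := ⟨_, rfl⟩
      rw [show b - 2 * u + 1 * x + 2 * y = b by omega,
        show -(2 * k) - u + x + y = -k - s by omega] at R1
      exact dbl (a := b) (t := -k) (s := s) (d := k) (by omega) (by omega) R1 (E1.ln 1) Lk
        (fun q t' _ _ _ _ => hG _ _ (by omega) (by omega) (by omega))
  have Lb := H.fwd (-1) (by omega) (by omega) (2 * M).toNat _ _ (b - 2 * M) (-(2 * M)) (E4.ln (-1))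
    (by omega) (by omega) (hG _ _ (by omega) (by omega) (by omega))
  exact H.two _ _ _ _ (hG _ _ (by omega) (by omega) (by omega)) F Lb (by omega)

theorem left (hG : H.Good) {L a : ℤ} (hP : H.P L a) : H.E (a - L) (-L) := by
  have hP' := hP
  obtain ⟨hL, ha, ha', hpar, e1, e2⟩ := hP'
  rcases up hG hP with h | h
  · exact down hL 0 (by omega) (by omega) h.2.2.2.2.1 h.2.2.2.2.2 (by omega) (by omega)
      (hG _ _ (by omega) (by omega) (by omega))
  · have key : H.E (a - 2 * L) (-(2 * L)) := by
      rcases up hG h with h4 | h4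
      · exact down (L := 2 * L) (by omega) 0 (by omega) (by omega) h4.2.2.2.2.1 h4.2.2.2.2.2
          (by omega) (by omega) (hG _ _ (by omega) (by omega) (by omega))
      · refine wallB hG hP h.2.2.2.2.1 ?_
        have := h4.2.2.2.2.1
        rwa [show 2 * (2 * L) = 4 * L by ring] at this
    refine down hL 1 (by omega) (by omega) key ?_ (by omega) (by omega)
      (hG _ _ (by omega) (by omega) (by omega))
    rw [sub_add_cancel]
    exact h.2.2.2.2.1

theorem right (hG : H.Good) {L a : ℤ} (hP : H.P L a) : H.E (a + 2 * L) (-L) := by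
  have := left hG.mir hP.mir
  rw [mir_E] at this
  convert this using 1
  ring

theorem pairs (hG : H.Good) (h0 : H.E 0 (-1)) (h1 : H.E 1 (-1)) (n : ℕ) : ∃ a, H.P (2 ^ n) a := by
  induction n with
  | zero => exact ⟨0, by norm_num, by norm_num, by norm_num, Or.inl (by norm_num), h0, h1⟩
  | succ n ih =>
    obtain ⟨a, ha⟩ := ih
    rw [pow_succ, mul_comm]
    rcases up hG ha with h | h
    · exact ⟨_, h⟩
    · exact ⟨_, h⟩

theorem desc {n : ℕ} {A i : ℤ} (hD : ∀ q t, t ≤ -1 → q - i ≤ 100 * (-t) → i - q ≤ 100 * (-t) → H.D q t)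
    (h0 : H.E A (-2 ^ n)) (h1 : H.E (A + 2 ^ n) (-2 ^ n)) (h2 : H.E (A + 2 * 2 ^ n) (-2 ^ n))
    (h3 : H.E (A + 3 * 2 ^ n) (-2 ^ n)) (j : ℕ) : ∀ k : ℕ, k + j = n → ∀ m : ℤ, 0 ≤ m →
    m * 2 ^ k ≤ 3 * 2 ^ n → A + m * 2 ^ k - i ≤ 2 * 2 ^ k → i - (A + m * 2 ^ k) ≤ 2 * 2 ^ k →
    H.E (A + m * 2 ^ k) (-2 ^ k) := by
  induction j with
  | zero =>
    intro k hk m hm hm' _ _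
    obtain rfl : k = n := by omega
    have hp : (0 : ℤ) < 2 ^ k := by positivity
    have : m ≤ 3 := le_of_mul_le_mul_right hm' hp
    obtain rfl | rfl | rfl | rfl : m = 0 ∨ m = 1 ∨ m = 2 ∨ m = 3 := by omega
    · simpa using h0
    · simpa using h1
    · exact h2
    · exact h3
  | succ j ih =>
    intro k hk m hm hm' hi hi'
    have IH := ih (k + 1) (by omega)
    have hn : (2 : ℤ) ^ n = 2 ^ (j + 1) * 2 ^ k := by rw [← pow_add]; congr 1; omega
    have hk1 : (2 : ℤ) ^ (k + 1) = 2 * 2 ^ k := by ring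
    have hj1 : (2 : ℤ) ^ (j + 1) = 2 * 2 ^ j := by ring
    have hp : (0 : ℤ) < 2 ^ k := by positivity
    have hp1 : (1 : ℤ) ≤ 2 ^ k := hp
    have hmle : m ≤ 3 * (2 * 2 ^ j) := by
      rw [← hj1]
      refine le_of_mul_le_mul_right (a := (2 : ℤ) ^ k) ?_ hp
      rw [hn] at hm'; linarith
    have hD0 : H.D (A + m * 2 ^ k) (-2 ^ k) := hD _ _ (by omega) (by omega) (by omega)
    have IH' : ∀ c : ℤ, 0 ≤ c → c ≤ 3 * 2 ^ j → A + 2 * c * 2 ^ k - i ≤ 4 * 2 ^ k →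
        i - (A + 2 * c * 2 ^ k) ≤ 4 * 2 ^ k → H.E (A + 2 * c * 2 ^ k) (-(2 * 2 ^ k)) := by
      intro c hc hc' h4 h5
      have := IH c hc (by rw [hn, hk1, hj1]; nlinarith) (by rw [hk1]; linarith) (by rw [hk1]; linarith)
      rw [hk1] at this
      convert this using 1
      ring
    rcases Int.even_or_odd' m with ⟨c, rfl | rfl⟩
    · by_cases hc : c + 1 ≤ 3 * 2 ^ j
      · have e1 := IH' c (by omega) (by omega) (by linarith) (by linarith)
        have e2 := IH' (c + 1) (by omega) (by omega) (by linarith) (by linarith)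
        exact down hp 0 (by omega) (by omega) e1 (by convert e2 using 1; ring) (by ring) (by ring) hD0
      · have hj : (0 : ℤ) < 2 ^ j := by positivity
        have e1 := IH' (c - 1) (by omega) (by omega) (by linarith) (by linarith)
        have e2 := IH' c (by omega) (by omega) (by linarith) (by linarith)
        exact down hp 2 (by omega) (by omega) e1 (by convert e2 using 1; ring) (by ring) (by ring) hD0
    · have e1 := IH' c (by omega) (by omega) (by linarith) (by linarith)
      have e2 := IH' (c + 1) (by omega) (by omega) (by linarith) (by linarith)
      exact down hp 1 (by omega) (by omega) e1 (by convert e2 using 1; ring) (by ring) (by ring) hD0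

/-- The conclusion of the abstract argument. -/
theorem main (hG : H.Good) (h0 : H.E 0 (-1)) (h1 : H.E 1 (-1)) (i : ℤ)
    (hD : ∀ q t, t ≤ -1 → q - i ≤ 100 * (-t) → i - q ≤ 100 * (-t) → H.D q t) :
    H.E i (-1) ∧ H.E (i + 1) (-1) := by
  obtain ⟨n, hn⟩ : ∃ n : ℕ, |i| + 2 < 2 ^ n := by
    obtain ⟨n, hn⟩ := pow_unbounded_of_one_lt (|i| + 2) (by norm_num : (1 : ℤ) < 2)
    exact ⟨n, hn⟩
  obtain ⟨a, hP⟩ := pairs hG h0 h1 n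
  have hl := left hG hP
  have hr := right hG hP
  obtain ⟨hL, ha, ha', hpar, e1, e2⟩ := hP
  have key := desc (n := n) (A := a - 2 ^ n) hD hl (by rwa [sub_add_cancel])
    (by convert e2 using 1; ring) (by convert hr using 1; ring) n 0 (by omega)
  have hi1 := le_abs_self i
  have hi2 := neg_abs_le i
  constructor
  · have := key (i - (a - 2 ^ n)) (by omega) (by rw [pow_zero]; omega) (by rw [pow_zero]; omega) (by rw [pow_zero]; omega)
    simpa using this
  · have := key (i + 1 - (a - 2 ^ n)) (by omega) (by rw [pow_zero]; omega) (by rw [pow_zero]; omega) (by rw [pow_zero]; omega)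
    simpa using this

end Hist

/-! ## The concrete cellular automaton -/

namespace FiringSquad

/-- The type of speeds. -/
abbrev Sp : Type := ↥(Finset.Icc (-2 : ℤ) 2)

/-- The alphabet: `none` is the spreading state, `some none` the firing state, the other
states are sets of signals. -/
abbrev FB : Type := Option (Option (Finset Sp))

/-- The state `b` contains a signal of speed `v`. -/
def has (v : ℤ) (b : FB) : Prop := ∃ A, b = some (some A) ∧ ∃ h, (⟨v, h⟩ : Sp) ∈ A

open Classical in
/-- The normal state containing the signals whose speed satisfies `P`. -/
noncomputable def mk (P : ℤ → Prop) : FB :=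
  some (some (Finset.univ.filter fun v : Sp => P v))

open Classical in
theorem has_mk (v : ℤ) (P : ℤ → Prop) : has v (mk P) ↔ (-2 ≤ v ∧ v ≤ 2) ∧ P v := by
  constructor
  · rintro ⟨A, hA, h, hv⟩
    simp only [mk, Option.some.injEq] at hA
    subst hA
    rw [Finset.mem_filter] at hv
    exact ⟨Finset.mem_Icc.1 h, hv.2⟩
  · rintro ⟨h, hv⟩
    exact ⟨_, rfl, Finset.mem_Icc.2 h, Finset.mem_filter.2 ⟨Finset.mem_univ _, hv⟩⟩

theorem has_range {v : ℤ} {b : FB} (h : has v b) : -2 ≤ v ∧ v ≤ 2 := by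
  obtain ⟨A, _, h, _⟩ := h
  exact Finset.mem_Icc.1 h

theorem mk_congr {P Q : ℤ → Prop} (h : ∀ v, -2 ≤ v → v ≤ 2 → (P v ↔ Q v)) : mk P = mk Q := by
  unfold mk
  congr 2
  ext v
  have := Finset.mem_Icc.1 v.2
  simp [h v this.1 this.2]

theorem mk_normal (P : ℤ → Prop) : ∃ A, mk P = some (some A) := ⟨_, rfl⟩

/-- The state with all signals. -/
noncomputable def full : FB := mk fun _ => True

open Classical in
/-- The local rule, as a function of the relative neighbourhood. -/
noncomputable def G (n : ℤ → FB) : FB :=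
  if ∃ d, -100 ≤ d ∧ d ≤ 100 ∧ (n d = none ∨ n d = some none) then none
  else if ∀ d, -100 ≤ d → d ≤ 100 → n d = full then some none
  else if ∃ d v, -5 ≤ d ∧ d + 1 ≤ 5 ∧ has v (n d) ∧ has (v - 2) (n (d + 1)) then none
  else if (∀ u, -2 ≤ u → u ≤ 2 → (has u (n (-u)) ↔ u % 2 = 0)) ∨
      (∀ u, -2 ≤ u → u ≤ 2 → (has u (n (-u)) ↔ u % 2 = 1)) then full
  else if ∀ v v', has v (n (-v)) → has v' (n (-v')) → (v - v') % 4 = 0 then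
    mk fun v => has v (n (-v))
  else none

/-- Clipping to the neighbourhood. -/
def cl (d : ℤ) : ℤ := max (-100) (min d 100)

theorem cl_mem (d : ℤ) : -100 ≤ cl d ∧ cl d ≤ 100 := by unfold cl; omega

theorem cl_eq {d : ℤ} (h : -100 ≤ d) (h' : d ≤ 100) : cl d = d := by unfold cl; omega

/-- The local rule. -/
noncomputable def rule (u : Fin (2 * 100 + 1) → FB) : FB :=
  G fun d => u ⟨(cl d + 100).toNat, by have := cl_mem d; omega⟩

theorem ca_eq (x : Config FB) (i : ℤ) : caMap 100 rule x i = G fun d => x (i + cl d) := by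
  unfold caMap rule
  congr 1
  funext d
  have := cl_mem d
  exact congrArg x (by dsimp only; push_cast; omega)

theorem spreading : SpreadingRule rule (none : FB) := by
  rintro u ⟨j, hj⟩
  unfold rule G
  rw [if_pos]
  refine ⟨(j : ℕ) - 100, by omega, by omega, Or.inl ?_⟩
  have hj2 := j.2
  refine Eq.trans (congrArg u (Fin.ext ?_)) hj
  change (cl ((j : ℕ) - 100) + 100).toNat = j
  rw [cl_eq (by omega) (by omega)]
  omega

theorem G_normal {n : ℤ → FB} {A : Finset Sp} (h : G n = some (some A)) :
    (∀ d, -100 ≤ d → d ≤ 100 → ∃ A', n d = some (some A')) ∧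
    (∀ d v, -5 ≤ d → d + 1 ≤ 5 → has v (n d) → has (v - 2) (n (d + 1)) → False) ∧
    ((((∀ u, -2 ≤ u → u ≤ 2 → (has u (n (-u)) ↔ u % 2 = 0)) ∨
      (∀ u, -2 ≤ u → u ≤ 2 → (has u (n (-u)) ↔ u % 2 = 1))) ∧ some (some A) = full) ∨
     ((∀ v v', has v (n (-v)) → has v' (n (-v')) → (v - v') % 4 = 0) ∧
       some (some A) = mk fun v => has v (n (-v)))) := by
  unfold G at h
  split_ifs at h with h1 h2 h3 h4 h5
  · simp at h
  · refine ⟨?_, ?_, Or.inl ⟨h4, h.symm⟩⟩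
    · intro d hd hd'
      rcases hn : n d with _ | _ | A'
      · exact absurd ⟨d, hd, hd', Or.inl hn⟩ h1
      · exact absurd ⟨d, hd, hd', Or.inr hn⟩ h1
      · exact ⟨A', rfl⟩
    · intro d v a b c e
      exact h3 ⟨d, v, a, b, c, e⟩
  · refine ⟨?_, ?_, Or.inr ⟨h5, h.symm⟩⟩
    · intro d hd hd'
      rcases hn : n d with _ | _ | A'
      · exact absurd ⟨d, hd, hd', Or.inl hn⟩ h1
      · exact absurd ⟨d, hd, hd', Or.inr hn⟩ h1
      · exact ⟨A', rfl⟩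
    · intro d v a b c e
      exact h3 ⟨d, v, a, b, c, e⟩

theorem G_fire {n : ℤ → FB} (h : G n = some none) :
    ∀ d, -100 ≤ d → d ≤ 100 → n d = full := by
  unfold G at h
  split_ifs at h with h1 h2 h3 h4 h5
  · exact h2
  · simp [full, mk] at h
  · simp [mk] at h

theorem has_full (v : ℤ) (h : -2 ≤ v) (h' : v ≤ 2) : has v full :=
  (has_mk _ _).2 ⟨⟨h, h'⟩, trivial⟩

/-- The information carried by a normal cell. -/
theorem ca_normal {x : Config FB} {p : ℤ} {A : Finset Sp} (h : caMap 100 rule x p = some (some A)) :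
    (∀ q, -100 ≤ q - p → q - p ≤ 100 → ∃ A', x q = some (some A')) ∧
    (∀ q v, -5 ≤ q - p → q + 1 - p ≤ 5 → has v (x q) → has (v - 2) (x (q + 1)) → False) ∧
    ((((∀ u, -2 ≤ u → u ≤ 2 → (has u (x (p - u)) ↔ u % 2 = 0)) ∨
      (∀ u, -2 ≤ u → u ≤ 2 → (has u (x (p - u)) ↔ u % 2 = 1))) ∧ caMap 100 rule x p = full) ∨
     ((∀ v v', has v (x (p - v)) → has v' (x (p - v')) → (v - v') % 4 = 0) ∧
       caMap 100 rule x p = mk fun v => has v (x (p - v)))) := by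
  rw [ca_eq] at h ⊢
  have cu : ∀ u : ℤ, -2 ≤ u → u ≤ 2 → p + cl (-u) = p - u := fun u h1 h2 => by
    rw [cl_eq (by omega) (by omega)]; ring
  obtain ⟨h1, h2, h3⟩ := G_normal h
  rw [h]
  refine ⟨?_, ?_, ?_⟩
  · intro q hq hq'
    have := h1 (q - p) hq hq'
    rw [cl_eq hq hq', show p + (q - p) = q by ring] at this
    exact this
  · intro q v a b c e
    refine h2 (q - p) v a (by omega) ?_ ?_
    · rw [cl_eq (by omega) (by omega), show p + (q - p) = q by ring]
      exact c
    · rw [cl_eq (by omega) (by omega), show p + (q - p + 1) = q + 1 by ring]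
      exact e
  · rcases h3 with ⟨h3 | h3, h4⟩ | ⟨h3, h4⟩
    · refine Or.inl ⟨Or.inl fun u hu hu' => ?_, h4⟩
      rw [← cu u hu hu']; exact h3 u hu hu'
    · refine Or.inl ⟨Or.inr fun u hu hu' => ?_, h4⟩
      rw [← cu u hu hu']; exact h3 u hu hu'
    · refine Or.inr ⟨fun v v' a b => ?_, ?_⟩
      · have ra := has_range a
        have rb := has_range b
        exact h3 v v' (by rw [cu v ra.1 ra.2]; exact a) (by rw [cu v' rb.1 rb.2]; exact b)
      · rw [h4]
        exact mk_congr fun v hv hw => by rw [cu v hv hw]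

/-! ### The history of a backward orbit -/

/-- The history attached to a backward orbit. -/
noncomputable def hist (st : ℤ → Config FB) (hst : ∀ t ≤ 0, st t = caMap 100 rule (st (t - 1))) :
    Hist where
  D p t := t ≤ 0 ∧ ∃ A, st t p = some (some A)
  Ln v p t := has v (st t p)
  cone p q t h h1 h2 := by
    obtain ⟨ht, A, hA⟩ := h
    rw [hst t ht] at hA
    exact ⟨by omega, (ca_normal hA).1 q h1 h2⟩
  pers v p t h h1 h2 h3 := by
    obtain ⟨ht, A, hA⟩ := h
    rw [hst t ht] at hA ⊢
    rcases (ca_normal hA).2.2 with ⟨-, h4⟩ | ⟨-, h4⟩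
    · rw [h4]; exact has_full v h1 h2
    · rw [h4, has_mk]; exact ⟨⟨h1, h2⟩, h3⟩
  trace v p t h h1 := by
    obtain ⟨ht, A, hA⟩ := h
    rw [hst t ht] at hA h1 ⊢
    rcases (ca_normal hA).2.2 with ⟨-, h4⟩ | ⟨-, h4⟩
    · rw [h4]; exact Or.inl has_full
    · rw [h4, has_mk] at h1; exact Or.inr h1.2
  etyp p t h h1 := by
    obtain ⟨ht, A, hA⟩ := h
    rw [hst t ht] at hA h1
    rcases (ca_normal hA).2.2 with ⟨h3, -⟩ | ⟨h3, h4⟩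
    · exact h3
    · rw [h4] at h1
      have a := ((has_mk _ _).1 (h1 0 (by omega) (by omega))).2
      have b := ((has_mk _ _).1 (h1 1 (by omega) (by omega))).2
      have := h3 _ _ a b
      omega
  conf v v' p t h h1 h2 := by
    obtain ⟨ht, A, hA⟩ := h
    rw [hst t ht] at hA
    have ra := has_range h1
    have rb := has_range h2
    rcases (ca_normal hA).2.2 with ⟨h3 | h3, -⟩ | ⟨h3, -⟩
    · have := (h3 v ra.1 ra.2).1 h1
      have := (h3 v' rb.1 rb.2).1 h2
      omega
    · have := (h3 v ra.1 ra.2).1 h1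
      have := (h3 v' rb.1 rb.2).1 h2
      omega
    · have := h3 v v' h1 h2
      omega
  birth v v' p t h h1 h2 h5 := by
    obtain ⟨ht, A, hA⟩ := h
    rw [hst t ht] at hA ⊢
    rcases (ca_normal hA).2.2 with ⟨-, h4⟩ | ⟨h3, -⟩
    · rw [h4]; exact has_full
    · exact absurd (h3 v v' h1 h2) h5
  two v v' p t h h1 h2 h5 := by
    obtain ⟨ht, A, hA⟩ := h
    rw [hst t ht] at hA h1 h2 ⊢
    rcases (ca_normal hA).2.2 with ⟨-, h4⟩ | ⟨h3, h4⟩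
    · rw [h4]; exact has_full
    · rw [h4, has_mk] at h1 h2
      exact absurd (h3 v v' h1.2 h2.2) h5
  jump v p q t h h1 h2 h3 h4 h5 h6 := by
    obtain ⟨ht, A, hA⟩ := h
    rw [hst t ht] at hA
    exact (ca_normal hA).2.1 q v h3 h6 h1 h2

theorem cone_iter (H : Hist) (i : ℤ) (h : ∀ q, q - i ≤ 100 → i - q ≤ 100 → H.D q (-1)) :
    ∀ q t, t ≤ -1 → q - i ≤ 100 * (-t) → i - q ≤ 100 * (-t) → H.D q t := by
  have key : ∀ (m : ℕ) (q : ℤ), q - i ≤ 100 * (m + 1) → i - q ≤ 100 * (m + 1) →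
      H.D q (-1 - m) := by
    intro m
    induction m with
    | zero => intro q h1 h2; simpa using h q (by simpa using h1) (by simpa using h2)
    | succ m ih =>
      intro q h1 h2
      push_cast at h1 h2
      have := ih (max (min q (i + 100 * (m + 1))) (i - 100 * (m + 1))) (by omega) (by omega)
      have := H.cone _ q _ this (by omega) (by omega)
      convert this using 1
      push_cast
      ring
  intro q t ht h1 h2
  have := key (-1 - t).toNat q (by omega) (by omega)
  convert this using 1
  omega

theorem exists_pre {X : Type*} [TopologicalSpace X] [CompactSpace X] [T2Space X] {F : X → X}
    (hF : Continuous F) {x : X} (hx : ∀ j : ℕ, x ∈ Set.range F^[j]) :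
    ∃ y, (∀ j : ℕ, y ∈ Set.range F^[j]) ∧ F y = x := by
  have hc : ∀ j : ℕ, IsCompact (F ⁻¹' {x} ∩ Set.range F^[j]) := fun j =>
    (isCompact_range (hF.iterate j)).inter_left (isClosed_singleton.preimage hF)
  have h1 : ∀ j : ℕ, F ⁻¹' {x} ∩ Set.range F^[j + 1] ⊆ F ⁻¹' {x} ∩ Set.range F^[j] := by
    rintro j y ⟨h1, z, hz⟩
    exact ⟨h1, F z, by rw [← hz]; rfl⟩
  have h2 : ∀ j : ℕ, (F ⁻¹' {x} ∩ Set.range F^[j]).Nonempty := by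
    intro j
    obtain ⟨z, hz⟩ := hx (j + 1)
    refine ⟨F^[j] z, ?_, z, rfl⟩
    rw [Function.iterate_succ_apply'] at hz
    exact hz
  obtain ⟨y, hy⟩ := IsCompact.nonempty_iInter_of_sequence_nonempty_isCompact_isClosed
    (fun j : ℕ => F ⁻¹' {x} ∩ Set.range F^[j]) h1 h2 (hc 0) (fun j => (hc j).isClosed)
  rw [Set.mem_iInter] at hy
  exact ⟨y, fun j => (hy j).2, (hy 0).1⟩

theorem exists_orbit {X : Type*} [TopologicalSpace X] [CompactSpace X] [T2Space X] {F : X → X}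
    (hF : Continuous F) {x : X} (hx : ∀ j : ℕ, x ∈ Set.range F^[j]) :
    ∃ y : ℕ → X, y 0 = x ∧ ∀ n, y n = F (y (n + 1)) := by
  choose g hg hg' using fun (z : {z : X // ∀ j : ℕ, z ∈ Set.range F^[j]}) => exists_pre hF z.2
  refine ⟨fun n => ((fun z => (⟨g z, hg z⟩ : {z : X // ∀ j : ℕ, z ∈ Set.range F^[j]}))^[n]
    ⟨x, hx⟩).1, rfl, fun n => ?_⟩
  dsimp only
  rw [Function.iterate_succ_apply']
  exact (hg' _).symm

theorem orbit (x : Config FB) (hx : x ∈ limitSet (caMap 100 rule)) :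
    ∃ y : ℕ → Config FB, y 0 = x ∧ ∀ n, y n = caMap 100 rule (y (n + 1)) := by
  let _ : TopologicalSpace FB := ⊥
  have _ : DiscreteTopology FB := ⟨rfl⟩
  refine exists_orbit ?_ (fun j => Set.mem_iInter.1 hx j)
  refine continuous_pi fun i => ?_
  exact (continuous_of_discreteTopology (f := rule)).comp
    (continuous_pi fun j => continuous_apply _)

theorem part2 (x : Config FB) (hx : x ∈ limitSet (caMap 100 rule)) (h0 : x 0 = some none) (i : ℤ) :
    x i = none ∨ x i = some none := by
  obtain ⟨y, hy, hy'⟩ := orbit x hx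
  obtain ⟨st, hs⟩ : ∃ st : ℤ → Config FB, st = fun t => y (-t).toNat := ⟨_, rfl⟩
  have hst : ∀ t ≤ 0, st t = caMap 100 rule (st (t - 1)) := by
    intro t ht
    subst hs
    dsimp only
    rw [hy' (-t).toNat]
    congr 2
    omega
  have hx0 : x = caMap 100 rule (st (-1)) := by
    have := hst 0 le_rfl
    rw [← hy]
    simpa [hs] using this
  have fl : ∀ q, -100 ≤ q → q ≤ 100 → st (-1) q = full := by
    intro q hq hq'
    rw [hx0, ca_eq] at h0
    have := G_fire h0 q hq hq'
    rwa [cl_eq hq hq', zero_add] at this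
  have hG : (hist st hst).Good := by
    have := cone_iter (hist st hst) 0
      (fun q h1 h2 => ⟨by omega, by rw [fl q (by omega) (by omega)]; exact mk_normal _⟩)
    intro q t ht h1 h2
    exact this q t ht (by omega) (by omega)
  have e0 : (hist st hst).E 0 (-1) := fun u hu hu' => by
    change has u (st (-1) 0)
    rw [fl 0 (by omega) (by omega)]; exact has_full u hu hu'
  have e1 : (hist st hst).E 1 (-1) := fun u hu hu' => by
    change has u (st (-1) 1)
    rw [fl 1 (by omega) (by omega)]; exact has_full u hu hu'
  by_contra hcon
  rcases hxi : x i with _ | _ | A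
  · exact hcon (Or.inl hxi)
  · exact hcon (Or.inr hxi)
  rw [hx0] at hxi
  obtain ⟨a, b, -⟩ := ca_normal hxi
  obtain ⟨f0, f1⟩ := Hist.main hG e0 e1 i (cone_iter (hist st hst) i
    (fun q h1 h2 => ⟨by omega, a q (by omega) (by omega)⟩))
  exact b i 1 (by omega) (by omega) (f0 1 (by omega) (by omega)) (f1 (1 - 2) (by omega) (by omega))

/-! ### The initial configurations -/

/-- A row of the synchronised space-time diagram: emission points at distance `L`, seen `s` steps
after the emission. -/
noncomputable def tr (L s : ℤ) : Config FB := fun p => mk fun v => L ∣ p - v * s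

theorem has_tr (L s p v : ℤ) : has v (tr L s p) ↔ (-2 ≤ v ∧ v ≤ 2) ∧ L ∣ p - v * s := has_mk _ _

theorem arr_tr (L s p v : ℤ) :
    has v (tr L s (p + cl (-v))) ↔ (-2 ≤ v ∧ v ≤ 2) ∧ L ∣ p - v * (s + 1) := by
  rw [has_tr]
  refine and_congr_right fun h => ?_
  rw [cl_eq (by omega) (by omega), show p + -v - v * s = p - v * (s + 1) by ring]

theorem odd_ndvd {M s : ℤ} (h : 2 * M ∣ 1 + 2 * s) : False := by
  have := (Dvd.intro M rfl : (2 : ℤ) ∣ 2 * M).trans h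
  omega

open Classical in
theorem G_tr (M s p : ℤ) : caMap 100 rule (tr (2 * M) s) p =
  if (∀ u, -2 ≤ u → u ≤ 2 → (2 * M ∣ p - u * (s + 1) ↔ u % 2 = 0)) ∨
      (∀ u, -2 ≤ u → u ≤ 2 → (2 * M ∣ p - u * (s + 1) ↔ u % 2 = 1)) then full
  else if ∀ v v', -2 ≤ v → v ≤ 2 → -2 ≤ v' → v' ≤ 2 → 2 * M ∣ p - v * (s + 1) →
      2 * M ∣ p - v' * (s + 1) → (v - v') % 4 = 0 then
    mk fun v => 2 * M ∣ p - v * (s + 1)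
  else none := by
  rw [ca_eq]
  unfold G
  rw [if_neg, if_neg, if_neg]
  · refine if_congr ?_ rfl (if_congr ?_ ?_ rfl)
    · refine or_congr ?_ ?_ <;>
      · refine forall_congr' fun u => forall_congr' fun hu => forall_congr' fun hu' => ?_
        rw [arr_tr]
        simp [hu, hu']
    · simp only [arr_tr]
      constructor
      · intro h v v' a b c d e f
        exact h v v' ⟨⟨a, b⟩, e⟩ ⟨⟨c, d⟩, f⟩
      · rintro h v v' ⟨⟨a, b⟩, e⟩ ⟨⟨c, d⟩, f⟩
        exact h v v' a b c d e f
    · refine mk_congr fun v hv hv' => ?_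
      rw [arr_tr]
      simp [hv, hv']
  · rintro ⟨d, v, h1, h2, h3, h4⟩
    dsimp only at h3 h4
    rw [cl_eq (by omega) (by omega), has_tr] at h3 h4
    have := dvd_sub h4.2 h3.2
    exact odd_ndvd (M := M) (s := s) (this.trans (dvd_of_eq (by ring)))
  · intro h
    have a := h 0 (by omega) (by omega)
    have b := h 1 (by omega) (by omega)
    dsimp only at a b
    rw [cl_eq (by omega) (by omega)] at a b
    have a' := (has_tr _ _ _ _).1 (a ▸ has_full 1 (by omega) (by omega))
    have b' := (has_tr _ _ _ _).1 (b ▸ has_full (-1) (by omega) (by omega))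
    have := dvd_sub b'.2 a'.2
    exact odd_ndvd (M := M) (s := s) (this.trans (dvd_of_eq (by ring)))
  · rintro ⟨d, -, -, h⟩
    simp [tr, mk] at h

theorem step1 (k : ℕ) (s : ℤ) (hs : 0 ≤ s) (h : s + 1 < 2 ^ k) :
    caMap 100 rule (tr (2 * 2 ^ k) s) = tr (2 * 2 ^ k) (s + 1) := by
  have no1 : ¬ (2 * 2 ^ k : ℤ) ∣ s + 1 := fun hd => by
    have := Int.le_of_dvd (by omega) hd
    omega
  have no2 : ¬ (2 * 2 ^ k : ℤ) ∣ 2 * (s + 1) := fun hd => by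
    have := Int.le_of_dvd (by omega) hd
    omega
  have no3 : ¬ (2 * 2 ^ k : ℤ) ∣ 3 * (s + 1) := fun hd => by
    refine no1 (IsCoprime.dvd_of_dvd_mul_left ?_ hd)
    rw [← pow_succ']
    exact IsCoprime.pow_left ⟨-1, 1, by norm_num⟩
  funext p
  rw [G_tr, if_neg, if_pos]
  · rfl
  · intro v v' a b c d e f
    have g := dvd_sub f e
    rw [show p - v' * (s + 1) - (p - v * (s + 1)) = (v - v') * (s + 1) by ring] at g
    obtain ⟨w, hw⟩ : ∃ w, w = v - v' := ⟨_, rfl⟩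
    rw [← hw] at g ⊢
    have w1 : -4 ≤ w := by omega
    have w2 : w ≤ 4 := by omega
    clear hw
    have g' : (2 * 2 ^ k : ℤ) ∣ (-w) * (s + 1) := by rw [neg_mul]; exact (dvd_neg).2 g
    interval_cases w
    · rfl
    · exact absurd g' no3
    · exact absurd g' no2
    · exact absurd (by simpa using g') no1
    · rfl
    · exact absurd (by simpa using g) no1
    · exact absurd g no2
    · exact absurd g no3
    · rfl
  · rintro (h | h)
    · have a := (h 0 (by omega) (by omega)).2 rfl
      have b := (h 2 (by omega) (by omega)).2 rfl
      have := dvd_sub a b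
      exact no2 (this.trans (dvd_of_eq (by ring)))
    · have a := (h (-1) (by omega) (by omega)).2 rfl
      have b := (h 1 (by omega) (by omega)).2 rfl
      have := dvd_sub a b
      exact no2 (this.trans (dvd_of_eq (by ring)))

theorem step2 (M : ℤ) (hM : 0 < M) : caMap 100 rule (tr (2 * M) (M - 1)) = tr M 0 := by
  funext p
  rw [G_tr, sub_add_cancel]
  by_cases hp : M ∣ p
  · have hf : tr M 0 p = full := mk_congr fun v _ _ => by simpa using hp
    rw [hf, if_pos]
    obtain ⟨c, rfl⟩ := hp
    have key : ∀ u : ℤ, 2 * M ∣ M * c - u * M ↔ 2 ∣ c - u := fun u => by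
      rw [show M * c - u * M = (c - u) * M by ring]
      exact mul_dvd_mul_iff_right hM.ne'
    simp only [key]
    rcases Int.emod_two_eq_zero_or_one c with h | h
    · left; intro u _ _; omega
    · right; intro u _ _; omega
  · have key : ∀ u : ℤ, ¬ 2 * M ∣ p - u * M := fun u hd => by
      have h1 : M ∣ p - u * M := (Dvd.intro_left 2 rfl).trans hd
      exact hp ((dvd_sub_left (Dvd.intro_left u rfl)).1 h1)
    rw [if_neg, if_pos]
    · refine mk_congr fun v _ _ => ?_
      simp [key, hp]
    · intro v v' _ _ _ _ h
      exact absurd h (key v)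
    · rintro (h | h)
      · exact key 0 ((h 0 (by omega) (by omega)).2 rfl)
      · exact key 1 ((h 1 (by omega) (by omega)).2 rfl)

theorem step3 : caMap 100 rule (tr 1 0) = fun _ => some none := by
  funext p
  have hf : ∀ q, tr 1 0 q = full := fun q => mk_congr fun v _ _ => by simp
  rw [ca_eq]
  unfold G
  rw [if_neg, if_pos]
  · intro d _ _
    exact hf _
  · rintro ⟨d, -, -, h⟩
    simp [tr, mk] at h

theorem run : ∀ (J k : ℕ) (s : ℤ), 0 ≤ s → 2 * s < 2 ^ k → (2 : ℤ) ^ k - s = J →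
    (caMap 100 rule)^[J] (tr (2 ^ k) s) = (fun _ => (some none : FB)) ∧
      ∀ (i : ℤ) (j : ℕ), j < J → (caMap 100 rule)^[j] (tr (2 ^ k) s) i ≠ some none := by
  intro J
  induction J with
  | zero =>
    intro k s h1 h2 h3
    push_cast at h3
    omega
  | succ J ih =>
    intro k s h1 h2 h3
    push_cast at h3
    have base : ∀ i, tr (2 ^ k) s i ≠ some none := fun i => by simp [tr, mk]
    suffices hh : (caMap 100 rule)^[J] (caMap 100 rule (tr (2 ^ k) s)) =
        (fun _ => (some none : FB)) ∧ ∀ (i : ℤ) (j : ℕ), j < J →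
          (caMap 100 rule)^[j] (caMap 100 rule (tr (2 ^ k) s)) i ≠ some none by
      refine ⟨hh.1, fun i j hj => ?_⟩
      rcases j with _ | j
      · exact base i
      · exact hh.2 i j (by omega)
    rcases k with _ | k
    · rw [pow_zero] at *
      obtain rfl : s = 0 := by omega
      obtain rfl : J = 0 := by omega
      exact ⟨step3, fun i j hj => absurd hj (by omega)⟩
    · rw [pow_succ'] at *
      by_cases hs : s + 1 < 2 ^ k
      · rw [step1 k s h1 hs]
        have := ih (k + 1) (s + 1) (by omega) (by rw [pow_succ']; omega) (by rw [pow_succ']; omega)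
        rwa [pow_succ'] at this
      · obtain rfl : s = 2 ^ k - 1 := by omega
        rw [step2 _ (by positivity)]
        exact ih k 0 le_rfl (by simp) (by omega)

theorem exists_ks (J : ℕ) : ∃ (k : ℕ) (s : ℤ), 0 ≤ s ∧ 2 * s < 2 ^ k ∧ (2 : ℤ) ^ k - s = (J + 1 : ℕ) := by
  induction J with
  | zero => exact ⟨0, 0, by simp⟩
  | succ J ih =>
    obtain ⟨k, s, h1, h2, h3⟩ := ih
    push_cast at h3
    by_cases hs : s = 0
    · subst hs
      have : (0 : ℤ) < 2 ^ k := by positivity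
      refine ⟨k + 1, 2 ^ k - 1, by omega, by rw [pow_succ']; omega, by rw [pow_succ']; push_cast; omega⟩
    · exact ⟨k, s - 1, by omega, by omega, by push_cast; omega⟩

theorem part1 (J : ℕ) : ∃ z : Config FB, (caMap 100 rule)^[J] z = (fun _ => (some none : FB)) ∧
    ∀ (i : ℤ) (j : ℕ), j < J → (caMap 100 rule)^[j] z i ≠ some none := by
  rcases J with _ | J
  · exact ⟨fun _ => some none, rfl, fun i j hj => absurd hj (by omega)⟩
  · obtain ⟨k, s, h1, h2, h3⟩ := exists_ks J
    exact ⟨_, run (J + 1) k s h1 h2 h3⟩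

end FiringSquad

/-- The Firing Squad construction: there are a finite alphabet `B`, a cellular
automaton `S` on `B` and states `κ, γ ∈ B`, with `κ` spreading, such that
(1) for every `J` some configuration reaches the uniform configuration of `γ`'s at
time exactly `J`, the state `γ` appearing nowhere before time `J`; and
(2) every configuration of the limit set of `S` containing `γ` at position `0`
only carries the states `κ` and `γ`. -/
theorem firing_squad_exists :
    ∃ (B : Type) (_ : Fintype B) (r : ℕ) (f : (Fin (2 * r + 1) → B) → B) (κ γ : B),
      SpreadingRule f κ ∧
      (∀ J : ℕ, ∃ z : Config B, (caMap r f)^[J] z = (fun _ => γ) ∧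
        ∀ (i : ℤ) (j : ℕ), j < J → (caMap r f)^[j] z i ≠ γ) ∧
      (∀ x ∈ limitSet (caMap r f), x 0 = γ → ∀ i : ℤ, x i = κ ∨ x i = γ) := by
  exact ⟨FiringSquad.FB, inferInstance, 100, FiringSquad.rule, none, some none,
    FiringSquad.spreading, FiringSquad.part1, FiringSquad.part2⟩
end

section
/- Let C be a nonempty finite alphabet and let Σ ⊆ 𝟚^ℤ be a subshift with Σ ≠ 𝟚^ℤ. Then there exist k ∈ ℕ with k ≥ 1 and a set E ⊆ 𝟚^k with E ∩ L_k(Σ) = ∅ such that E is strongly freezing and there is a bijection ξ : L_k(Σ) × C → E. -/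
/-- The shift map `σ(x)_i = x_{i+1}`. -/
def shift {B : Type*} : Config B → Config B := fun x i => x (i + 1)

/-- A subshift: a closed, shift-invariant subset of the configuration space
(`Bool` carrying the discrete topology, `Config Bool` the product topology). -/
def IsSubshift (S : Set (Config Bool)) : Prop :=
  IsClosed S ∧ shift '' S = S

/-- `L_k(Σ)`: the words of length `k` occurring in configurations of `Σ` at
positions `[0, k)`. -/
def Lwords (S : Set (Config Bool)) (k : ℕ) : Set (Fin k → Bool) :=
  {w | ∃ x ∈ S, ∀ j : Fin k, x ((j : ℕ) : ℤ) = w j}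

/-- A set `E` of words of length `k` is strongly freezing if for `1 ≤ i < k` no
configuration carries a word of `E` both at position `0` and at position `i`
(equivalently, `E·𝟚^i ∩ 𝟚^i·E = ∅`). -/
def StronglyFreezingSet {k : ℕ} (E : Set (Fin k → Bool)) : Prop :=
  ∀ i : ℕ, 1 ≤ i → i < k → ∀ x : Config Bool,
    ¬ ((fun j : Fin k => x ((j : ℕ) : ℤ)) ∈ E ∧
       (fun j : Fin k => x ((i : ℤ) + ((j : ℕ) : ℤ))) ∈ E)

lemma aux_pow (a b c : ℕ) (h : a < b) : ∃ N : ℕ, c * a ^ N < b ^ N := by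
  have hb : (0 : ℝ) < b := by exact_mod_cast (by omega : 0 < b)
  have h1 : (a : ℝ) / b < 1 := by
    rw [div_lt_one hb]; exact_mod_cast h
  obtain ⟨N, hN⟩ := exists_pow_lt_of_lt_one (show (0 : ℝ) < 1 / (c + 1) by positivity) h1
  refine ⟨N, ?_⟩
  rw [div_pow, div_lt_div_iff₀ (by positivity) (by positivity)] at hN
  have h2 : a ^ N * (c + 1) < 1 * b ^ N := by exact_mod_cast hN
  nlinarith [Nat.zero_le (a ^ N)]

lemma aux_shift (S : Set (Config Bool)) (hS : IsSubshift S) (x : Config Bool) (hx : x ∈ S)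
    (a : ℕ) : (fun i => x (i + a)) ∈ S := by
  induction a with
  | zero => simpa using hx
  | succ a ih =>
    have : shift (fun i => x (i + a)) ∈ shift '' S := ⟨_, ih, rfl⟩
    rw [hS.2] at this
    convert this using 1
    funext i
    simp only [shift]
    congr 1
    push_cast
    ring

lemma aux_forbidden (S : Set (Config Bool)) (hS : IsSubshift S) (hne : S ≠ Set.univ) :
    ∃ m : ℕ, 1 ≤ m ∧ ∃ u : ℕ → Bool, ∀ y ∈ S, ∀ p : ℕ,
      ¬ ∀ t : ℕ, t < m → y ((p : ℤ) + t) = u t := by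
  obtain ⟨x, hx⟩ := (Set.ne_univ_iff_exists_notMem S).1 hne
  have ho : IsOpen Sᶜ := hS.1.isOpen_compl
  obtain ⟨I, v, hv, hI⟩ := isOpen_pi_iff.1 ho x hx
  set M := I.sup Int.natAbs with hM
  refine ⟨2 * M + 1, by omega, fun t => x ((t : ℤ) - M), ?_⟩
  intro y hy p h
  have h1 := aux_shift S hS y hy (p + M)
  refine hI (?_ : (fun i => y (i + ((p + M : ℕ) : ℤ))) ∈ _) h1
  intro i hi
  have hle : i.natAbs ≤ M := Finset.le_sup (f := Int.natAbs) hi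
  have h2 := h (i + M).toNat (by omega)
  have h3 : (((i + M).toNat : ℕ) : ℤ) = i + M := by omega
  simp only [h3] at h2
  have h4 : y (i + ((p + M : ℕ) : ℤ)) = x i := by
    rw [show i + ((p + M : ℕ) : ℤ) = p + (i + M) by push_cast; ring, h2]
    congr 1; ring
  show y (i + ((p + M : ℕ) : ℤ)) ∈ v i
  rw [h4]
  exact (hv i hi).2

lemma aux_submul (S : Set (Config Bool)) (hS : IsSubshift S) (a b : ℕ) :
    Nat.card (Lwords S (a + b)) ≤ Nat.card (Lwords S a) * Nat.card (Lwords S b) := by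
  rw [← Nat.card_prod]
  refine Nat.card_le_card_of_injective
    (fun w : Lwords S (a + b) =>
      ((⟨fun j => w.1 (Fin.castAdd b j), ?_⟩ : Lwords S a),
       (⟨fun j => w.1 (Fin.natAdd a j), ?_⟩ : Lwords S b))) ?_
  · obtain ⟨x, hx, h⟩ := w.2
    exact ⟨x, hx, fun j => by simpa using h (Fin.castAdd b j)⟩
  · obtain ⟨x, hx, h⟩ := w.2
    refine ⟨_, aux_shift S hS x hx a, fun j => ?_⟩
    have := h (Fin.natAdd a j)
    refine Eq.trans ?_ this
    simp [add_comm]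
  · intro w w' hw
    simp only [Prod.mk.injEq, Subtype.mk.injEq] at hw
    apply Subtype.ext
    funext j
    refine Fin.addCases (fun i => ?_) (fun i => ?_) j
    · exact congrFun hw.1 i
    · exact congrFun hw.2 i

lemma aux_card_le (S : Set (Config Bool)) (m : ℕ) : Nat.card (Lwords S m) ≤ 2 ^ m := by
  have := Nat.card_le_card_of_injective (fun w : Lwords S m => w.1) Subtype.val_injective
  simpa using this

lemma aux_submul_pow (S : Set (Config Bool)) (hS : IsSubshift S) (a q : ℕ) :
    Nat.card (Lwords S (a * q)) ≤ Nat.card (Lwords S a) ^ q := by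
  induction q with
  | zero => simpa using aux_card_le S 0
  | succ q ih =>
    rw [Nat.mul_succ, pow_succ]
    exact (aux_submul S hS _ _).trans (Nat.mul_le_mul_right _ ih)

/-- The coded word: zeros, then ones at multiples of `n`, the forbidden word, and free bits. -/
def codeWord (n Q : ℕ) (u : ℕ → Bool) (f : Fin Q × Fin (n - 1) → Bool) (p : ℕ) : Bool :=
  if p < n then false
  else if n ∣ p then true
  else if p < 2 * n then u (p - (n + 1))
  else if h : p / n - 2 < Q ∧ p % n - 1 < n - 1 then f (⟨p / n - 2, h.1⟩, ⟨p % n - 1, h.2⟩)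
  else true

lemma codeWord_free (n Q : ℕ) (u : ℕ → Bool) (f : Fin Q × Fin (n - 1) → Bool)
    (a : Fin Q) (b : Fin (n - 1)) :
    codeWord n Q u f (n * (a + 2) + (b + 1)) = f (a, b) := by
  have hb := b.2
  have hm : (n * ((a : ℕ) + 2) + (b + 1)) % n = b + 1 := by
    rw [Nat.mul_add_mod, Nat.mod_eq_of_lt (by omega)]
  have hd : (n * ((a : ℕ) + 2) + (b + 1)) / n = a + 2 := by
    rw [Nat.mul_add_div (by omega), Nat.div_eq_of_lt (by omega)]
  have hge : 2 * n ≤ n * ((a : ℕ) + 2) := by nlinarith [Nat.zero_le (n * (a : ℕ))]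
  unfold codeWord
  rw [if_neg (by omega), if_neg (by rw [Nat.dvd_iff_mod_eq_zero, hm]; omega), if_neg (by omega)]
  simp only [hm, hd]
  rw [dif_pos ⟨by have := a.2; omega, by omega⟩]
  rfl

theorem binary_simulation_encoding (C : Type) [Fintype C] [Nonempty C]
    (S : Set (Config Bool)) (hS : IsSubshift S) (hne : S ≠ Set.univ) :
    ∃ k : ℕ, 1 ≤ k ∧ ∃ E : Set (Fin k → Bool),
      E ∩ Lwords S k = ∅ ∧ StronglyFreezingSet E ∧
      Nonempty ((Lwords S k × C) ≃ E) := by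
  obtain ⟨m, hm, u, hu⟩ := aux_forbidden S hS hne
  have hlt : Nat.card (Lwords S m) < 2 ^ m := by
    have h1 : (fun j : Fin m => u j) ∉ Lwords S m := by
      rintro ⟨x, hx, h⟩
      exact hu x hx 0 (fun t ht => by simpa using h ⟨t, ht⟩)
    have := Set.ncard_lt_card (s := Lwords S m) (fun h => h1 (h ▸ Set.mem_univ _))
    simpa [Nat.card_coe_set_eq] using this
  obtain ⟨N, hN⟩ := aux_pow _ _ (2 * (2 ^ m) ^ 2) hlt
  set n := m * (N + 2) with hn
  have hnm : m + 1 ≤ n := by nlinarith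
  have hlt2 : Nat.card (Lwords S n) < 2 ^ (n - 1) := by
    have h1 := aux_submul_pow S hS m (N + 2)
    have h2 : 2 * Nat.card (Lwords S m) ^ (N + 2) < (2 ^ m) ^ (N + 2) := by
      calc 2 * Nat.card (Lwords S m) ^ (N + 2)
          = 2 * Nat.card (Lwords S m) ^ 2 * Nat.card (Lwords S m) ^ N := by ring
        _ ≤ 2 * (2 ^ m) ^ 2 * Nat.card (Lwords S m) ^ N := by gcongr
        _ < (2 ^ m) ^ N := hN
        _ ≤ (2 ^ m) ^ (N + 2) := Nat.pow_le_pow_right (by positivity) (by omega)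
    rw [← pow_mul, ← hn] at h2
    have h3 : 2 ^ n = 2 * 2 ^ (n - 1) := by rw [← pow_succ']; congr 1; omega
    rw [← hn] at h1
    omega
  obtain ⟨Q, hQ⟩ := aux_pow _ _ (Nat.card C * 2 * Nat.card (Lwords S n) ^ 2) hlt2
  set k := n * (Q + 2) + 1 with hk
  let g : (Fin Q × Fin (n - 1) → Bool) → (Fin k → Bool) :=
    fun f j => codeWord n Q u f j
  have hg : Function.Injective g := by
    intro f f' h
    funext ⟨a, b⟩
    rw [← codeWord_free n Q u f a b, ← codeWord_free n Q u f' a b]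
    have hb : n * ((a : ℕ) + 2) + (b + 1) < k := by
      have h1 : (a : ℕ) + 3 ≤ Q + 2 := by omega
      have h2 := Nat.mul_le_mul_left n h1
      have := b.2
      have h3 : n * ((a : ℕ) + 3) = n * ((a : ℕ) + 2) + n := by ring
      omega
    exact congrFun h ⟨_, hb⟩
  have hcard : Nat.card (Lwords S k × C) ≤ Nat.card (Fin Q × Fin (n - 1) → Bool) := by
    have h1 := aux_submul S hS (n * (Q + 2)) 1
    have h2 := aux_submul_pow S hS n (Q + 2)
    have h3 := aux_card_le S 1
    have h4 : Nat.card (Fin Q × Fin (n - 1) → Bool) = (2 ^ (n - 1)) ^ Q := by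
      simp [← pow_mul, mul_comm]
    rw [h4, Nat.card_prod]
    calc Nat.card (Lwords S k) * Nat.card C
        ≤ (Nat.card (Lwords S n) ^ (Q + 2) * 2 ^ 1) * Nat.card C :=
          Nat.mul_le_mul_right _ (h1.trans (Nat.mul_le_mul h2 h3))
      _ = Nat.card C * 2 * Nat.card (Lwords S n) ^ 2 * Nat.card (Lwords S n) ^ Q := by ring
      _ ≤ _ := hQ.le
  obtain ⟨e⟩ : Nonempty ((Lwords S k × C) ↪ (Fin Q × Fin (n - 1) → Bool)) := by
    classical
    have := Fintype.ofFinite (Lwords S k)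
    rw [Nat.card_eq_fintype_card, Nat.card_eq_fintype_card] at hcard
    exact Function.Embedding.nonempty_of_card_le hcard
  refine ⟨k, by omega, Set.range (fun z => g (e z)), ?_, ?_,
    ⟨Equiv.ofInjective _ (hg.comp e.injective)⟩⟩
  · rw [Set.eq_empty_iff_forall_notMem]
    rintro w ⟨⟨z, rfl⟩, y, hy, h⟩
    refine hu y hy (n + 1) (fun t ht => ?_)
    have hge : 2 * n ≤ n * (Q + 2) := by nlinarith [Nat.zero_le (n * Q)]
    have h1 := h ⟨n + 1 + t, by omega⟩
    have h2 : ((n + 1 + t : ℕ) : ℤ) = ((n + 1 : ℕ) : ℤ) + t := by push_cast; ring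
    rw [← h2, h1]
    show codeWord n Q u (e z) (n + 1 + t) = u t
    unfold codeWord
    rw [if_neg (by omega), if_neg, if_pos (by omega)]
    · congr 1; omega
    · rw [Nat.dvd_iff_mod_eq_zero, add_assoc, Nat.add_mod_left, Nat.mod_eq_of_lt (by omega)]
      omega
  · rintro i hi hik x ⟨⟨z, hz⟩, ⟨z', hz'⟩⟩
    have hn0 : 0 < n := by omega
    obtain ⟨c, hc⟩ : ∃ c, c = (i - 1) / n + 1 := ⟨_, rfl⟩
    have hdm := Nat.div_add_mod (i - 1) n
    have hml := Nat.mod_lt (i - 1) hn0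
    have hnc : n * c = n * ((i - 1) / n) + n := by rw [hc]; ring
    have hcQ : c ≤ Q + 2 := by
      rw [hc, Nat.succ_le_iff, Nat.div_lt_iff_lt_mul hn0, mul_comm]
      omega
    have hck := Nat.mul_le_mul_left n hcQ
    have h1 := congrFun hz ⟨n * c, by omega⟩
    have h2 := congrFun hz' ⟨n * c - i, by omega⟩
    have h3 : codeWord n Q u (e z) (n * c) = true := by
      unfold codeWord
      rw [if_neg (by omega), if_pos (Dvd.intro _ rfl)]
    have h4 : codeWord n Q u (e z') (n * c - i) = false := by
      unfold codeWord
      rw [if_pos (by omega)]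
    have h5 : (i : ℤ) + ((n * c - i : ℕ) : ℤ) = ((n * c : ℕ) : ℤ) := by omega
    simp only [g] at h1 h2
    rw [h3] at h1
    rw [h4, h5, ← h1] at h2
    exact absurd h2 (by simp)
end

section
/- Let P be any family of subsets of 𝟚^ℤ such that there exists a non-surjective cellular automaton on 𝟚 whose limit set belongs to P and there exists a non-surjective cellular automaton on 𝟚 whose limit set does not belong to P. Then there exist two non-surjective cellular automata G₀, G₁ on 𝟚 sharing a common quiescent state q ∈ 𝟚 such that Ω_{G₀} ∈ P and Ω_{G₁} ∉ P. -/
/-- `F` is a cellular automaton: it is induced by some local rule of some radius. -/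
def IsCA {B : Type*} (F : Config B → Config B) : Prop :=
  ∃ (r : ℕ) (f : (Fin (2 * r + 1) → B) → B), F = caMap r f

/-- A state `q` is quiescent for `F` if `F` fixes the uniform configuration of `q`. -/
def Quiescent {B : Type*} (F : Config B → Config B) (q : B) : Prop :=
  F (fun _ => q) = (fun _ => q)

theorem isCA_comp_self {F : Config Bool → Config Bool} (hF : IsCA F) : IsCA (F ∘ F) := by
  obtain ⟨r, f, rfl⟩ := hF
  refine ⟨2 * r, fun w => f fun j => f fun k => w ⟨j.1 + k.1, by omega⟩, ?_⟩
  funext x i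
  simp only [caMap, Function.comp]
  congr 1
  funext j
  congr 1
  funext k
  congr 1
  push_cast
  ring

theorem limitSet_comp_self (F : Config Bool → Config Bool) :
    limitSet (F ∘ F) = limitSet F := by
  have h2 : ∀ j, (F ∘ F)^[j] = F^[2 * j] := fun j => by
    rw [Function.iterate_mul]; rfl
  ext x
  simp only [limitSet, Set.mem_iInter, h2]
  constructor
  · intro h j
    obtain ⟨y, hy⟩ := h j
    refine ⟨F^[j] y, ?_⟩
    rw [← Function.iterate_add_apply, ← two_mul, hy]
  · intro h j
    exact h (2 * j)

theorem exists_quiescent_comp_self {F : Config Bool → Config Bool} (hF : IsCA F) :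
    ∃ q, Quiescent (F ∘ F) q := by
  obtain ⟨r, f, rfl⟩ := hF
  have hc : ∀ b : Bool, caMap r f (fun _ => b) = fun _ => f fun _ => b := fun b => rfl
  cases h : f fun _ => false
  · exact ⟨false, by simp only [Quiescent, Function.comp, hc, h]⟩
  · cases h' : f fun _ => true
    · exact ⟨false, by simp only [Quiescent, Function.comp, hc, h, h']⟩
    · exact ⟨true, by simp only [Quiescent, Function.comp, hc, h']⟩

/-- The conjunction automaton: non-surjective, and both states are quiescent. -/
def andCA : Config Bool → Config Bool := caMap 1 fun w => w 1 && w 2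

theorem andCA_apply (x : Config Bool) (i : ℤ) : andCA x i = (x i && x (i + 1)) := by
  have e : i - 1 + 2 = i + 1 := by ring
  simp [andCA, caMap, e]

theorem andCA_not_surjective : ¬ Function.Surjective andCA := by
  intro h
  obtain ⟨x, hx⟩ := h fun i => decide (i ≠ 1)
  have a0 := congrFun hx 0
  have a1 := congrFun hx 1
  have a2 := congrFun hx 2
  simp [andCA_apply] at a0 a1 a2
  simp_all

theorem andCA_quiescent (q : Bool) : Quiescent andCA q := by
  funext i
  simp [andCA_apply]

/-- If a nontrivial property `P` over limit sets of non-surjective cellular automata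
on `𝟚` holds for some of them and fails for another, then one can choose two
non-surjective witnesses `G₀ ∈ P`, `G₁ ∉ P` sharing a common quiescent state. -/
theorem exists_witnesses_with_common_quiescent_state (P : Set (Set (Config Bool)))
    (h0 : ∃ F : Config Bool → Config Bool, IsCA F ∧ ¬ Function.Surjective F ∧ limitSet F ∈ P)
    (h1 : ∃ F : Config Bool → Config Bool, IsCA F ∧ ¬ Function.Surjective F ∧ limitSet F ∉ P) :
    ∃ (G₀ G₁ : Config Bool → Config Bool) (q : Bool),
      IsCA G₀ ∧ IsCA G₁ ∧ ¬ Function.Surjective G₀ ∧ ¬ Function.Surjective G₁ ∧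
      Quiescent G₀ q ∧ Quiescent G₁ q ∧ limitSet G₀ ∈ P ∧ limitSet G₁ ∉ P := by
  obtain ⟨F₀, c0, s0, p0⟩ := h0
  obtain ⟨F₁, c1, s1, p1⟩ := h1
  obtain ⟨q₀, hq0⟩ := exists_quiescent_comp_self c0
  obtain ⟨q₁, hq1⟩ := exists_quiescent_comp_self c1
  rw [← limitSet_comp_self] at p0 p1
  have t0 : ¬ Function.Surjective (F₀ ∘ F₀) := fun h => s0 h.of_comp
  have t1 : ¬ Function.Surjective (F₁ ∘ F₁) := fun h => s1 h.of_comp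
  by_cases h : limitSet andCA ∈ P
  · exact ⟨andCA, F₁ ∘ F₁, q₁, ⟨1, _, rfl⟩, isCA_comp_self c1, andCA_not_surjective, t1,
      andCA_quiescent q₁, hq1, h, p1⟩
  · exact ⟨F₀ ∘ F₀, andCA, q₀, isCA_comp_self c0, ⟨1, _, rfl⟩, t0, andCA_not_surjective,
      hq0, andCA_quiescent q₀, p0, h⟩
end

section
/- Let B be a finite alphabet with at least two letters and let u ∈ B^* be a nonempty word. Then there exists a strongly freezing word w ∈ B^* having u as a prefix. (In fact, w = u b^k works for any letter b ≠ u₀ and any k ≥ 1 such that b^k does not occur in u.) -/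
/-- A word `w` (of length `≥ 1`) is strongly freezing if for every `1 ≤ i < |w|`
no word of length `|w| + i` both begins and ends with `w`, i.e. `w` does not
overlap a shifted copy of itself. -/
def StronglyFreezingWord {B : Type*} (w : List B) : Prop :=
  1 ≤ w.length ∧ ∀ i : ℕ, 1 ≤ i → i < w.length →
    ¬ ∃ v : List B, v.length = w.length + i ∧ w <+: v ∧ w <:+ v

theorem freezing_aux {B : Type*} (u : List B) (hu : u ≠ []) (b : B) (k : ℕ)
    (hb : b ≠ u.head hu) (hk : 1 ≤ k) (hn : ¬ List.replicate k b <:+: u) :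
    StronglyFreezingWord (u ++ List.replicate k b) := by
  have hpos : 0 < u.length := List.length_pos_iff.mpr hu
  refine ⟨by simp; omega, ?_⟩
  rintro i hi1 hi2 ⟨v, hv, ⟨s, hs⟩, ⟨p, hp⟩⟩
  generalize hw : u ++ List.replicate k b = w at *
  have hwl : w.length = u.length + k := by rw [← hw]; simp
  have hpl : p.length = i := by
    have := congrArg List.length hp
    simp at this; omega
  have h0 : w[0]? = some (u.head hu) := by
    rw [← hw, List.getElem?_append_left hpos, ← List.head?_eq_getElem?, List.head?_eq_some_head hu]
  have hlast : ∀ t, u.length ≤ t → t < u.length + k → w[t]? = some b := by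
    intro t h1 h2
    rw [← hw, List.getElem?_append_right h1, List.getElem?_replicate, if_pos (by omega)]
  have hper : ∀ t, t + i < w.length → w[t]? = w[t+i]? := by
    intro t ht
    have e1 : v[t+i]? = w[t+i]? := by rw [← hs, List.getElem?_append_left ht]
    have e2 : v[t+i]? = w[t]? := by
      rw [← hp, List.getElem?_append_right (by omega)]
      congr 1; omega
    rw [← e1, e2]
  have hne : w[0]? ≠ some b := by
    rw [h0]; intro h; exact hb (Option.some.inj h).symm
  by_cases hik : i ≤ k
  · have all : ∀ d t, t + d = w.length → 1 ≤ d → w[t]? = some b := by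
      intro d
      induction d using Nat.strong_induction_on with
      | _ d ih =>
        intro t htd hd
        by_cases h : u.length ≤ t
        · exact hlast t h (by omega)
        · rw [hper t (by omega)]
          exact ih (d - i) (by omega) (t+i) (by omega) (by omega)
    exact hne (all w.length 0 (by omega) (by omega))
  · by_cases hiu : u.length ≤ i
    · apply hne
      rw [hper 0 (by omega)]
      exact hlast _ (by omega) (by omega)
    · apply hn
      have : List.replicate k b = (u.drop (u.length - i)).take k := by
        apply List.ext_getElem?
        intro t
        rw [List.getElem?_replicate, List.getElem?_take]
        split_ifs with h
        · rw [List.getElem?_drop]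
          have e : w[u.length - i + t]? = u[u.length - i + t]? := by
            rw [← hw, List.getElem?_append_left (by omega)]
          rw [← e, hper _ (by omega)]
          exact (hlast _ (by omega) (by omega)).symm
        · rfl
      rw [this]
      exact (List.take_prefix _ _).isInfix.trans (List.drop_suffix _ _).isInfix

/-- Any nonempty word `u` over an alphabet with at least two letters extends to a
strongly freezing word with `u` as a prefix; in fact `u ++ b^k` works for any
letter `b ≠ u₀` and any `k ≥ 1` such that `b^k` does not occur in `u`. -/
theorem extend_to_strongly_freezing (B : Type*) [Fintype B]
    (hcard : 2 ≤ Fintype.card B) (u : List B) (hu : u ≠ []) :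
    (∃ w : List B, StronglyFreezingWord w ∧ u <+: w) ∧
    (∀ (b : B) (k : ℕ), b ≠ u.head hu → 1 ≤ k → ¬ List.replicate k b <:+: u →
      StronglyFreezingWord (u ++ List.replicate k b)) := by
  refine ⟨?_, fun b k hb hk hn => freezing_aux u hu b k hb hk hn⟩
  obtain ⟨b, hb⟩ := Fintype.exists_ne_of_one_lt_card (by omega) (u.head hu)
  refine ⟨_, freezing_aux u hu b (u.length + 1) hb (by omega) ?_, List.prefix_append _ _⟩
  intro h
  have := h.length_le
  simp at this
end
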